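/- Let G be a group, let n ≥ 1, let v > 0, let N ≥ 1, and let f_1, …, f_N be bounded G-invariant n-cocycles on G. Suppose there is a subgroup H ≤ G such that: (i) for every bounded (n−1)-cochain b on H, ‖f_1|_H + δb‖_∞ ≥ v; and (ii) for each i = 2, …, N there exists a bounded (n−1)-cochain b_i on H with f_i|_H = δb_i. Then for all real numbers a_1, …, a_N and every bounded (n−1)-cochain b on G, ‖a_1 f_1 + ⋯ + a_N f_N + δb‖_∞ ≥ |a_1|·v. -/

import Mathlib

/-- The ℓ¹-norm of a finitely supported real chain on tuples. -/
noncomputable def chainNorm {G : Type*} {m : ℕ} (Z : (Fin m → G) →₀ ℝ) : ℝ :=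
  Z.sum fun _ a => |a|

/-- The boundary of a chain: alternating sum of face maps (omitting entries). -/
noncomputable def chainBoundary {G : Type*} {m : ℕ} (Z : (Fin (m + 1) → G) →₀ ℝ) :
    (Fin m → G) →₀ ℝ :=
  Z.sum fun g a => ∑ i : Fin (m + 1), Finsupp.single (g ∘ i.succAbove) ((-1 : ℝ) ^ (i : ℕ) * a)

/-- Evaluation of a cochain on a chain. -/
noncomputable def chainEval {G : Type*} {m : ℕ} (f : (Fin m → G) → ℝ)
    (Z : (Fin m → G) →₀ ℝ) : ℝ :=
  Z.sum fun g a => a * f g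

/-- The homogeneous coboundary operator. -/
noncomputable def coboundary {G : Type*} {m : ℕ} (b : (Fin m → G) → ℝ) :
    (Fin (m + 1) → G) → ℝ :=
  fun g => ∑ i : Fin (m + 1), (-1 : ℝ) ^ (i : ℕ) * b (g ∘ i.succAbove)

/-- Pushforward of a chain along a map of groups, applied entrywise. -/
noncomputable def chainMap {G H : Type*} {m : ℕ} (φ : G → H) (Z : (Fin m → G) →₀ ℝ) :
    (Fin m → H) →₀ ℝ :=
  Finsupp.mapDomain (fun x => φ ∘ x) Z

/-!
Restriction along a homomorphism does not increase the sup-norm and maps bounded coboundaries to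
bounded coboundaries, so lower bounds for the seminorm may be checked after restriction. There the
linear combination differs from the multiple of the distinguished summand by a bounded coboundary,
and the seminorm is homogeneous and unchanged by adding bounded coboundaries.
-/

section Mul

variable {G K : Type*} [Mul G] [Mul K] {m : ℕ}

/-- The space of bounded left-invariant real functions of `m` variables in `G`. The index counts
variables, so these are the bounded cochains of degree `m - 1`. -/
def boundedCochains (G : Type*) [Mul G] (m : ℕ) : Submodule ℝ ((Fin m → G) → ℝ) where
  carrier := {b | (∀ (g : G) (x : Fin m → G), b (fun j => g * x j) = b x) ∧
    ∃ C : ℝ, ∀ x, |b x| ≤ C}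
  zero_mem' := ⟨fun _ _ => rfl, 0, fun _ => abs_zero.le⟩
  add_mem' := by
    rintro b c ⟨hb, B, hB⟩ ⟨hc, C, hC⟩
    exact ⟨fun g x => congrArg₂ (· + ·) (hb g x) (hc g x), B + C,
      fun x => (abs_add_le _ _).trans (add_le_add (hB x) (hC x))⟩
  smul_mem' := by
    rintro a b ⟨hb, B, hB⟩
    exact ⟨fun g x => congrArg (a * ·) (hb g x), |a| * B,
      fun x => (abs_mul _ _).trans_le (mul_le_mul_of_nonneg_left (hB x) (abs_nonneg a))⟩

/-- The coboundary operator `coboundary`, bundled as a linear map. -/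
noncomputable def coboundaryLinearMap (G : Type*) (m : ℕ) :
    ((Fin m → G) → ℝ) →ₗ[ℝ] ((Fin (m + 1) → G) → ℝ) where
  toFun := coboundary
  map_add' b c := by
    ext x
    simp only [coboundary, Pi.add_apply, mul_add, Finset.sum_add_distrib]
  map_smul' a b := by
    ext x
    simp only [coboundary, Pi.smul_apply, smul_eq_mul, RingHom.id_apply, Finset.mul_sum,
      mul_left_comm]

/-- The space of coboundaries of bounded cochains, as functions of `m + 1` variables. Two cocycles
that differ by an element of this space represent the same bounded cohomology class. -/
noncomputable def boundedCoboundaries (G : Type*) [Mul G] (m : ℕ) :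
    Submodule ℝ ((Fin (m + 1) → G) → ℝ) :=
  (boundedCochains G m).map (coboundaryLinearMap G m)

/-- Pullback of functions of `m` variables along `φ`, applied to each variable. For the inclusion
of a subgroup this is the restriction of cochains. -/
def cochainPullback (φ : K → G) (m : ℕ) : ((Fin m → G) → ℝ) →ₗ[ℝ] ((Fin m → K) → ℝ) :=
  LinearMap.funLeft ℝ ℝ (fun x j => φ (x j))

/-- `v` is a lower bound for the seminorm of `f` in bounded cohomology, that is, for `‖f + δb‖_∞`
over all bounded cochains `b`. Quantifying over upper bounds `C` avoids the junk value of `sSup`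
when `f` is unbounded. -/
def IsSeminormLowerBound (v : ℝ) (f : (Fin (m + 1) → G) → ℝ) : Prop :=
  ∀ β ∈ boundedCoboundaries G m, ∀ C : ℝ, (∀ x, |(f + β) x| ≤ C) → v ≤ C

theorem mem_boundedCoboundaries_iff {f : (Fin (m + 1) → G) → ℝ} :
    f ∈ boundedCoboundaries G m ↔ ∃ b : (Fin m → G) → ℝ,
      (∀ (g : G) (x : Fin m → G), b (fun j => g * x j) = b x) ∧ (∃ C : ℝ, ∀ x, |b x| ≤ C) ∧
        ∀ x, f x = coboundary b x := by
  constructor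
  · rintro ⟨b, ⟨hinv, hbdd⟩, rfl⟩
    exact ⟨b, hinv, hbdd, fun _ => rfl⟩
  · rintro ⟨b, hinv, hbdd, hf⟩
    exact ⟨b, ⟨hinv, hbdd⟩, funext fun x => (hf x).symm⟩

theorem isSeminormLowerBound_iff {v : ℝ} {f : (Fin (m + 1) → G) → ℝ} :
    IsSeminormLowerBound v f ↔ ∀ b : (Fin m → G) → ℝ,
      (∀ (g : G) (x : Fin m → G), b (fun j => g * x j) = b x) → (∃ C : ℝ, ∀ x, |b x| ≤ C) →
        ∀ C : ℝ, (∀ x, |f x + coboundary b x| ≤ C) → v ≤ C := by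
  constructor
  · intro h b hinv hbdd
    exact h (coboundary b) ⟨b, ⟨hinv, hbdd⟩, rfl⟩
  · rintro h _ ⟨b, ⟨hinv, hbdd⟩, rfl⟩
    exact h b hinv hbdd

theorem cochainPullback_mem_boundedCochains (φ : K →ₙ* G) {b : (Fin m → G) → ℝ}
    (hb : b ∈ boundedCochains G m) : cochainPullback φ m b ∈ boundedCochains K m := by
  obtain ⟨hinv, C, hC⟩ := hb
  refine ⟨fun k x => ?_, C, fun x => hC _⟩
  simpa only [cochainPullback, LinearMap.funLeft_apply, map_mul] using hinv (φ k) (fun j => φ (x j))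

theorem cochainPullback_mem_boundedCoboundaries (φ : K →ₙ* G) {β : (Fin (m + 1) → G) → ℝ}
    (hβ : β ∈ boundedCoboundaries G m) :
    cochainPullback φ (m + 1) β ∈ boundedCoboundaries K m := by
  obtain ⟨b, hb, rfl⟩ := hβ
  exact ⟨cochainPullback φ m b, cochainPullback_mem_boundedCochains φ hb, rfl⟩

namespace IsSeminormLowerBound

variable {v : ℝ} {f β : (Fin (m + 1) → G) → ℝ}

theorem of_cochainPullback (φ : K →ₙ* G)
    (h : IsSeminormLowerBound v (cochainPullback φ (m + 1) f)) : IsSeminormLowerBound v f :=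
  fun β hβ C hC =>
    h (cochainPullback φ (m + 1) β) (cochainPullback_mem_boundedCoboundaries φ hβ) C fun _ => hC _

theorem add_boundedCoboundary (h : IsSeminormLowerBound v f) (hβ : β ∈ boundedCoboundaries G m) :
    IsSeminormLowerBound v (f + β) := by
  intro γ hγ C hC
  rw [add_assoc] at hC
  exact h (β + γ) (add_mem hβ hγ) C hC

theorem smul [Nonempty G] (h : IsSeminormLowerBound v f) (a : ℝ) :
    IsSeminormLowerBound (|a| * v) (a • f) := by
  intro β hβ C hC
  rcases eq_or_ne a 0 with rfl | ha
  · obtain ⟨x⟩ : Nonempty (Fin (m + 1) → G) := inferInstance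
    simpa only [abs_zero, zero_mul] using (abs_nonneg _).trans (hC x)
  · have ha_pos : 0 < |a| := abs_pos.mpr ha
    have hfactor : a • f + β = a • (f + a⁻¹ • β) := by rw [smul_add, smul_inv_smul₀ ha]
    have hv : v ≤ C / |a| := by
      refine h (a⁻¹ • β) (Submodule.smul_mem _ _ hβ) _ fun x => ?_
      rw [le_div_iff₀' ha_pos, ← abs_mul]
      simpa only [hfactor, Pi.smul_apply, smul_eq_mul] using hC x
    exact (le_div_iff₀' ha_pos).mp hv

theorem sum_smul [Nonempty G] {ι : Type*} [Fintype ι] {f : ι → (Fin (m + 1) → G) → ℝ} {i₀ : ι}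
    (h : IsSeminormLowerBound v (f i₀)) (hf : ∀ i, i ≠ i₀ → f i ∈ boundedCoboundaries G m)
    (a : ι → ℝ) : IsSeminormLowerBound (|a i₀| * v) (∑ i, a i • f i) := by
  classical
  rw [← Finset.add_sum_erase Finset.univ _ (Finset.mem_univ i₀)]
  exact (h.smul (a i₀)).add_boundedCoboundary <|
    sum_mem fun i hi => Submodule.smul_mem _ _ (hf i (Finset.ne_of_mem_erase hi))

end IsSeminormLowerBound

theorem stmt_8_general [Nonempty K] (φ : K →ₙ* G) {ι : Type*} [Fintype ι]
    {f : ι → (Fin (m + 1) → G) → ℝ} {i₀ : ι} {v : ℝ}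
    (hi₀ : IsSeminormLowerBound v (cochainPullback φ (m + 1) (f i₀)))
    (hf : ∀ i, i ≠ i₀ → cochainPullback φ (m + 1) (f i) ∈ boundedCoboundaries K m) (a : ι → ℝ) :
    IsSeminormLowerBound (|a i₀| * v) (∑ i, a i • f i) := by
  refine .of_cochainPullback φ ?_
  simp only [map_sum, map_smul]
  exact .sum_smul (f := fun i => cochainPullback φ (m + 1) (f i)) hi₀ hf a

end Mul

/-- lower bound for seminorms of linear combinations of bounded
cocycles, via a subgroup where the first has maximal seminorm and the others vanish. -/
theorem stmt_8
    {G : Type*} [Group G] (n : ℕ) (hn : 1 ≤ n) (v : ℝ) (hv : 0 < v)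
    (N : ℕ) (hN : 1 ≤ N)
    (f : Fin N → (Fin (n + 1) → G) → ℝ)
    (hfinv : ∀ (i : Fin N) (x : G) (y : Fin (n + 1) → G), f i (fun j => x * y j) = f i y)
    (hfbdd : ∀ i : Fin N, ∃ C : ℝ, ∀ y, |f i y| ≤ C)
    (hfcoc : ∀ i : Fin N, coboundary (f i) = 0)
    (H : Subgroup G)
    (hi : ∀ b : (Fin n → H) → ℝ,
      (∀ (h : H) (x : Fin n → H), b (fun j => h * x j) = b x) →
      (∃ C : ℝ, ∀ x, |b x| ≤ C) →
      ∀ C : ℝ,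
        (∀ x : Fin (n + 1) → H,
          |f ⟨0, hN⟩ (fun j => (x j : G)) + coboundary b x| ≤ C) → v ≤ C)
    (hii : ∀ i : Fin N, i ≠ ⟨0, hN⟩ →
      ∃ bᵢ : (Fin n → H) → ℝ,
        (∀ (h : H) (x : Fin n → H), bᵢ (fun j => h * x j) = bᵢ x) ∧
        (∃ C : ℝ, ∀ x, |bᵢ x| ≤ C) ∧
        (∀ x : Fin (n + 1) → H, f i (fun j => (x j : G)) = coboundary bᵢ x)) :
    ∀ a : Fin N → ℝ,
      ∀ b : (Fin n → G) → ℝ,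
        (∀ (x : G) (y : Fin n → G), b (fun j => x * y j) = b y) →
        (∃ C : ℝ, ∀ y, |b y| ≤ C) →
        ∀ C : ℝ,
          (∀ y : Fin (n + 1) → G, |(∑ i, a i * f i y) + coboundary b y| ≤ C) →
          |a ⟨0, hN⟩| * v ≤ C := by
  intro a
  simpa only [isSeminormLowerBound_iff, Finset.sum_apply, Pi.smul_apply, smul_eq_mul] using
    stmt_8_general (H.subtype : H →ₙ* G) (isSeminormLowerBound_iff.mpr hi)
      (fun i hne => mem_boundedCoboundaries_iff.mpr (hii i hne)) a
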